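/- Blame-subtyping theorem for the EDA′ cast calculus: if M : Γ ⊢ A and every cast and blame expression occurring in M is safe for the label ℓ, then it is not the case that M ⟶* blame ℓ (M never reduces, in any number of steps, to blame with label ℓ). -/

import Mathlib

/-!
Being safe for `ℓ` is preserved by reduction, and `blame ℓ` is not safe for `ℓ`; hence a term that
is safe for `ℓ` can never reach `blame ℓ`.

Preservation (`SafeFor.red`) rests on two facts. Safety is closed under renaming and substitution
(`SafeFor.rename`, `SafeFor.subst`), because neither operation creates casts. And the components of
a safe cross cast are safe (`CastBlameSafe.arr`, `CastBlameSafe.prod`, `CastBlameSafe.sum`), because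
D-subtyping at `→`, `×`, `+` is inverted componentwise, with the same variance as the casts. The only
rule that creates blame is a failing projection `? ⇒ℓ' B` with `B ≠ ?`; since `?` is a D-subtype of
`?` alone, such a projection can be safe for `ℓ` only by carrying a label `ℓ' ≠ ℓ`
(`CastBlameSafe.proj_ne`).
-/

set_option maxHeartbeats 1000000

abbrev Label : Type := ℕ

inductive BaseTy : Type
  | nat | bool | int | unit | bot
deriving DecidableEq

inductive GType : Type
  | base (b : BaseTy)
  | unk
  | arr (A B : GType)
  | prod (A B : GType)
  | sum (A B : GType)
deriving DecidableEq

inductive Atomic : GType → Prop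
  | base (b : BaseTy) : Atomic (.base b)
  | unk : Atomic .unk

inductive TyPrec : GType → GType → Prop
  | unk (A : GType) : TyPrec .unk A
  | base (b : BaseTy) : TyPrec (.base b) (.base b)
  | arr : TyPrec A A' → TyPrec B B' → TyPrec (.arr A B) (.arr A' B')
  | prod : TyPrec A A' → TyPrec B B' → TyPrec (.prod A B) (.prod A' B')
  | sum : TyPrec A A' → TyPrec B B' → TyPrec (.sum A B) (.sum A' B')

inductive CtxPrec : List GType → List GType → Prop
  | nil : CtxPrec [] []
  | cons : TyPrec A A' → CtxPrec Γ Γ' → CtxPrec (A :: Γ) (A' :: Γ')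

inductive Consis : GType → GType → Type
  | unkR (A : GType) : Consis A .unk
  | unkL (B : GType) : Consis .unk B
  | base (b : BaseTy) : Consis (.base b) (.base b)
  | arr : Consis A' A → Consis B B' → Consis (.arr A B) (.arr A' B')
  | prod : Consis A A' → Consis B B' → Consis (.prod A B) (.prod A' B')
  | sum : Consis A A' → Consis B B' → Consis (.sum A B) (.sum A' B')

def Consis.join : ∀ {A B : GType}, Consis A B → GType
  | _, _, .unkR A => A
  | _, _, .unkL B => B
  | _, _, .base b => .base b
  | _, _, .arr c d => .arr c.join d.join
  | _, _, .prod c d => .prod c.join d.join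
  | _, _, .sum c d => .sum c.join d.join

def Consis.refl : (A : GType) → Consis A A
  | .unk => .unkR .unk
  | .base b => .base b
  | .arr A B => .arr (Consis.refl A) (Consis.refl B)
  | .prod A B => .prod (Consis.refl A) (Consis.refl B)
  | .sum A B => .sum (Consis.refl A) (Consis.refl B)

def Consis.symm : ∀ {A B : GType}, Consis A B → Consis B A
  | _, _, .unkR A => .unkL A
  | _, _, .unkL B => .unkR B
  | _, _, .base b => .base b
  | _, _, .arr c d => .arr c.symm d.symm
  | _, _, .prod c d => .prod c.symm d.symm
  | _, _, .sum c d => .sum c.symm d.symm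

mutual
def Consis.joinL : ∀ {A B : GType}, (c : Consis A B) → Consis A c.join
  | _, _, .unkR A => Consis.refl A
  | _, _, .unkL B => .unkL B
  | _, _, .base b => .base b
  | _, _, .arr c d => .arr (Consis.joinR c).symm (Consis.joinL d)
  | _, _, .prod c d => .prod (Consis.joinL c) (Consis.joinL d)
  | _, _, .sum c d => .sum (Consis.joinL c) (Consis.joinL d)

def Consis.joinR : ∀ {A B : GType}, (c : Consis A B) → Consis B c.join
  | _, _, .unkR A => .unkL A
  | _, _, .unkL B => Consis.refl B
  | _, _, .base b => .base b
  | _, _, .arr c d => .arr (Consis.joinL c).symm (Consis.joinR d)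
  | _, _, .prod c d => .prod (Consis.joinR c) (Consis.joinR d)
  | _, _, .sum c d => .sum (Consis.joinR c) (Consis.joinR d)
end

inductive GVar : List GType → GType → Type
  | z : GVar (A :: Γ) A
  | s : GVar Γ A → GVar (B :: Γ) A

def GVar.idx : ∀ {Γ A}, GVar Γ A → ℕ
  | _, _, .z => 0
  | _, _, .s x => x.idx + 1

inductive Prim : GType → Type
  | base (b : BaseTy) : Prim (.base b)
  | fn (b : BaseTy) {A : GType} : Prim A → Prim (.arr (.base b) A)

def BaseTy.rep : BaseTy → Type
  | .nat => ℕ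
  | .bool => Bool
  | .int => ℤ
  | .unit => Unit
  | .bot => Empty

def Prim.rep : ∀ {A : GType}, Prim A → Type
  | _, .base b => b.rep
  | _, .fn b p => b.rep → p.rep

def Consis.domArr : ∀ {A B C D : GType}, Consis (.arr A B) (.arr C D) → Consis C A
  | _, _, _, _, .arr c _ => c
def Consis.codArr : ∀ {A B C D : GType}, Consis (.arr A B) (.arr C D) → Consis B D
  | _, _, _, _, .arr _ d => d
def Consis.fstP : ∀ {A B C D : GType}, Consis (.prod A B) (.prod C D) → Consis A C
  | _, _, _, _, .prod c _ => c
def Consis.sndP : ∀ {A B C D : GType}, Consis (.prod A B) (.prod C D) → Consis B D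
  | _, _, _, _, .prod _ d => d
def Consis.inlS : ∀ {A B C D : GType}, Consis (.sum A B) (.sum C D) → Consis A C
  | _, _, _, _, .sum c _ => c
def Consis.inrS : ∀ {A B C D : GType}, Consis (.sum A B) (.sum C D) → Consis B D
  | _, _, _, _, .sum _ d => d

/-- EDA casts: a source type, target type, blame label, and a consistency proof. -/
inductive EDACast : GType → GType → Type
  | mk (A B : GType) (ℓ : Label) (h : Consis A B) : EDACast A B

/-- Cross casts: casts between two function, two pair, or two sum types. -/
inductive EDACross : ∀ {A B : GType}, EDACast A B → Prop
  | arr {A B C D : GType} {ℓ h} : EDACross (.mk (.arr A B) (.arr C D) ℓ h)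
  | prod {A B C D : GType} {ℓ h} : EDACross (.mk (.prod A B) (.prod C D) ℓ h)
  | sum {A B C D : GType} {ℓ h} : EDACross (.mk (.sum A B) (.sum C D) ℓ h)

/-- EDA inert casts: injections `A ⇒ℓ ?` with `A ≠ ?`. -/
inductive EDAInert : ∀ {A B : GType}, EDACast A B → Prop
  | inj {A : GType} {ℓ h} : A ≠ .unk → EDAInert (.mk A .unk ℓ h)

/-- EDA active casts: identity casts on atomic types, projections, and cross casts. -/
inductive EDAActive : ∀ {A B : GType}, EDACast A B → Prop
  | id {a : GType} {ℓ h} : Atomic a → EDAActive (.mk a a ℓ h)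
  | proj {B : GType} {ℓ h} : B ≠ .unk → EDAActive (.mk .unk B ℓ h)
  | cross {A B : GType} {c : EDACast A B} : EDACross c → EDAActive c

/-- Subtyping for "D" blame tracking: `?` is the top of the subtyping order. -/
inductive SubD : GType → GType → Prop
  | unk (A : GType) : SubD A .unk
  | base (b : BaseTy) : SubD (.base b) (.base b)
  | arr : SubD C A → SubD B D → SubD (.arr A B) (.arr C D)
  | prod : SubD A C → SubD B D → SubD (.prod A B) (.prod C D)
  | sum : SubD A C → SubD B D → SubD (.sum A B) (.sum C D)

/-- Blame-safety of an EDA cast w.r.t. a label: either the cast is a D-subtyping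
cast, or it carries a different label. -/
inductive CastBlameSafe : ∀ {A B : GType}, EDACast A B → Label → Prop
  | sub {A B : GType} {ℓ : Label} {h : Consis A B} :
      SubD A B → CastBlameSafe (.mk A B ℓ h) ℓ
  | neq {A B : GType} {ℓ ℓ' : Label} {h : Consis A B} :
      ℓ ≠ ℓ' → CastBlameSafe (.mk A B ℓ' h) ℓ

/-- Renamings. -/
def Ren (Γ Δ : List GType) : Type := ∀ A : GType, GVar Γ A → GVar Δ A

def Ren.ext {Γ Δ : List GType} (ρ : Ren Γ Δ) (B : GType) : Ren (B :: Γ) (B :: Δ) :=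
  fun _ x =>
    match x with
    | .z => .z
    | .s y => .s (ρ _ y)

def shiftRen {Γ : List GType} (B : GType) : Ren Γ (B :: Γ) := fun _ x => .s x

/-- Intrinsically-typed terms of the `CC′(⇒)` variant of the Parameterized Cast
Calculus: `case` has binding branches and there is a distinguished wrap
application `M⟪c⟫` for inert casts `c`. -/
inductive Tm' (Cast : GType → GType → Type) (Inert : ∀ A B : GType, Cast A B → Prop) :
    List GType → GType → Type
  | const {Γ : List GType} {A : GType} (p : Prim A) (k : p.rep) : Tm' Cast Inert Γ A
  | var {Γ A} (x : GVar Γ A) : Tm' Cast Inert Γ A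
  | lam {Γ B} (A : GType) (N : Tm' Cast Inert (A :: Γ) B) : Tm' Cast Inert Γ (.arr A B)
  | app {Γ A B} (L : Tm' Cast Inert Γ (.arr A B)) (M : Tm' Cast Inert Γ A) : Tm' Cast Inert Γ B
  | ite {Γ A} (L : Tm' Cast Inert Γ (.base .bool)) (M N : Tm' Cast Inert Γ A) :
      Tm' Cast Inert Γ A
  | cons {Γ A B} (M : Tm' Cast Inert Γ A) (N : Tm' Cast Inert Γ B) : Tm' Cast Inert Γ (.prod A B)
  | fst {Γ A B} (M : Tm' Cast Inert Γ (.prod A B)) : Tm' Cast Inert Γ A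
  | snd {Γ A B} (M : Tm' Cast Inert Γ (.prod A B)) : Tm' Cast Inert Γ B
  | inl {Γ A} (B : GType) (M : Tm' Cast Inert Γ A) : Tm' Cast Inert Γ (.sum A B)
  | inr {Γ B} (A : GType) (M : Tm' Cast Inert Γ B) : Tm' Cast Inert Γ (.sum A B)
  | case {Γ A B C} (L : Tm' Cast Inert Γ (.sum A B))
      (M : Tm' Cast Inert (A :: Γ) C) (N : Tm' Cast Inert (B :: Γ) C) : Tm' Cast Inert Γ C
  | cast {Γ A B} (M : Tm' Cast Inert Γ A) (c : Cast A B) : Tm' Cast Inert Γ B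
  | wrap {Γ A B} (M : Tm' Cast Inert Γ A) (c : Cast A B) (i : Inert A B c) : Tm' Cast Inert Γ B
  | blame {Γ} (A : GType) (ℓ : Label) : Tm' Cast Inert Γ A

def Tm'.rename {Cast Inert} :
    ∀ {Γ Δ : List GType} {A : GType}, Ren Γ Δ → Tm' Cast Inert Γ A → Tm' Cast Inert Δ A
  | _, _, _, _, .const p k => .const p k
  | _, _, _, ρ, .var x => .var (ρ _ x)
  | _, _, _, ρ, .lam A N => .lam A (N.rename (ρ.ext _))
  | _, _, _, ρ, .app L M => .app (L.rename ρ) (M.rename ρ)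
  | _, _, _, ρ, .ite L M N => .ite (L.rename ρ) (M.rename ρ) (N.rename ρ)
  | _, _, _, ρ, .cons M N => .cons (M.rename ρ) (N.rename ρ)
  | _, _, _, ρ, .fst M => .fst (M.rename ρ)
  | _, _, _, ρ, .snd M => .snd (M.rename ρ)
  | _, _, _, ρ, .inl B M => .inl B (M.rename ρ)
  | _, _, _, ρ, .inr A M => .inr A (M.rename ρ)
  | _, _, _, ρ, .case L M N => .case (L.rename ρ) (M.rename (ρ.ext _)) (N.rename (ρ.ext _))
  | _, _, _, ρ, .cast M c => .cast (M.rename ρ) c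
  | _, _, _, ρ, .wrap M c i => .wrap (M.rename ρ) c i
  | _, _, _, _, .blame A ℓ => .blame A ℓ

def Subst' (Cast : GType → GType → Type) (Inert : ∀ A B : GType, Cast A B → Prop)
    (Γ Δ : List GType) : Type :=
  ∀ A : GType, GVar Γ A → Tm' Cast Inert Δ A

def Subst'.exts {Cast Inert} {Γ Δ : List GType} (σ : Subst' Cast Inert Γ Δ) (B : GType) :
    Subst' Cast Inert (B :: Γ) (B :: Δ) :=
  fun _ x =>
    match x with
    | .z => .var .z
    | .s y => (σ _ y).rename (shiftRen B)

def Tm'.subst {Cast Inert} :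
    ∀ {Γ Δ : List GType} {A : GType}, Subst' Cast Inert Γ Δ → Tm' Cast Inert Γ A →
      Tm' Cast Inert Δ A
  | _, _, _, _, .const p k => .const p k
  | _, _, _, σ, .var x => σ _ x
  | _, _, _, σ, .lam A N => .lam A (N.subst (σ.exts _))
  | _, _, _, σ, .app L M => .app (L.subst σ) (M.subst σ)
  | _, _, _, σ, .ite L M N => .ite (L.subst σ) (M.subst σ) (N.subst σ)
  | _, _, _, σ, .cons M N => .cons (M.subst σ) (N.subst σ)
  | _, _, _, σ, .fst M => .fst (M.subst σ)
  | _, _, _, σ, .snd M => .snd (M.subst σ)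
  | _, _, _, σ, .inl B M => .inl B (M.subst σ)
  | _, _, _, σ, .inr A M => .inr A (M.subst σ)
  | _, _, _, σ, .case L M N => .case (L.subst σ) (M.subst (σ.exts _)) (N.subst (σ.exts _))
  | _, _, _, σ, .cast M c => .cast (M.subst σ) c
  | _, _, _, σ, .wrap M c i => .wrap (M.subst σ) c i
  | _, _, _, _, .blame A ℓ => .blame A ℓ

def substZero' {Cast Inert} {Γ : List GType} {B : GType} (N : Tm' Cast Inert Γ B) :
    Subst' Cast Inert (B :: Γ) Γ :=
  fun _ x =>
    match x with
    | .z => N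
    | .s y => .var y

def Tm'.subst1 {Cast Inert} {Γ : List GType} {A B : GType}
    (M : Tm' Cast Inert (B :: Γ) A) (N : Tm' Cast Inert Γ B) : Tm' Cast Inert Γ A :=
  M.subst (substZero' N)

/-- Evaluation frames for `CC′(⇒)`. -/
inductive Frame' (Cast : GType → GType → Type) (Inert : ∀ A B : GType, Cast A B → Prop)
    (Val : ∀ {Γ : List GType} {A : GType}, Tm' Cast Inert Γ A → Prop)
    (Γ : List GType) : GType → GType → Type
  | appL {A B} (M : Tm' Cast Inert Γ A) : Frame' Cast Inert Val Γ (.arr A B) B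
  | appR {A B} (L : Tm' Cast Inert Γ (.arr A B)) (h : Val L) : Frame' Cast Inert Val Γ A B
  | ite {A} (M N : Tm' Cast Inert Γ A) : Frame' Cast Inert Val Γ (.base .bool) A
  | consR {A B} (M : Tm' Cast Inert Γ A) (h : Val M) : Frame' Cast Inert Val Γ B (.prod A B)
  | consL {A B} (N : Tm' Cast Inert Γ B) : Frame' Cast Inert Val Γ A (.prod A B)
  | fst {A B} : Frame' Cast Inert Val Γ (.prod A B) A
  | snd {A B} : Frame' Cast Inert Val Γ (.prod A B) B
  | inl {A} (B : GType) : Frame' Cast Inert Val Γ A (.sum A B)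
  | inr {B} (A : GType) : Frame' Cast Inert Val Γ B (.sum A B)
  | case {A B C} (M : Tm' Cast Inert (A :: Γ) C) (N : Tm' Cast Inert (B :: Γ) C) :
      Frame' Cast Inert Val Γ (.sum A B) C
  | cast {A B} (c : Cast A B) : Frame' Cast Inert Val Γ A B

def plug' {Cast Inert Val} {Γ : List GType} {A B : GType} :
    Tm' Cast Inert Γ A → Frame' Cast Inert Val Γ A B → Tm' Cast Inert Γ B
  | M, .appL N => .app M N
  | M, .appR L _ => .app L M
  | M, .ite M₁ N₁ => .ite M M₁ N₁
  | M, .consR M₁ _ => .cons M₁ M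
  | M, .consL N => .cons M N
  | M, .fst => .fst M
  | M, .snd => .snd M
  | M, .inl B => .inl B M
  | M, .inr A => .inr A M
  | M, .case M₁ N₁ => .case M M₁ N₁
  | M, .cast c => .cast M c

abbrev EDAInert' : ∀ A B : GType, EDACast A B → Prop := fun _ _ c => EDAInert c

/-- Terms of the EDA′ calculus: `CC′(⇒)` instantiated with EDA casts. -/
abbrev EDATm' : List GType → GType → Type := Tm' EDACast EDAInert'

/-- Values of EDA′: wrap applications of inert casts to values are values. -/
inductive EDAValue' : ∀ {Γ : List GType} {A : GType}, EDATm' Γ A → Prop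
  | lam {Γ A B} {N : EDATm' (A :: Γ) B} : EDAValue' (.lam A N)
  | const {Γ A} {p : Prim A} {k : p.rep} : EDAValue' (.const (Γ := Γ) p k)
  | pair {Γ A B} {M : EDATm' Γ A} {N : EDATm' Γ B} :
      EDAValue' M → EDAValue' N → EDAValue' (.cons M N)
  | inl {Γ A B} {M : EDATm' Γ A} : EDAValue' M → EDAValue' (.inl (Γ := Γ) B M)
  | inr {Γ A B} {M : EDATm' Γ B} : EDAValue' M → EDAValue' (.inr (Γ := Γ) A M)
  | wrap {Γ A B} {M : EDATm' Γ A} {c : EDACast A B} {i : EDAInert c} :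
      EDAValue' M → EDAValue' (.wrap M c i)

/-- Reduction for the EDA′ calculus (`CC′(⇒)` instantiated at EDA). -/
inductive EDARed' : ∀ {Γ : List GType} {A : GType}, EDATm' Γ A → EDATm' Γ A → Prop
  -- congruence rules
  | xi {Γ A B} {M M' : EDATm' Γ A} (F : Frame' EDACast EDAInert' @EDAValue' Γ A B) :
      EDARed' M M' → EDARed' (plug' M F) (plug' M' F)
  | xiBlame {Γ A B} (F : Frame' EDACast EDAInert' @EDAValue' Γ A B) (ℓ : Label) :
      EDARed' (plug' (.blame A ℓ) F) (.blame B ℓ)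
  -- an applied inert cast becomes a wrap
  | wrap {Γ A B} {V : EDATm' Γ A} {c : EDACast A B} (i : EDAInert c) :
      EDAValue' V → EDARed' (.cast V c) (.wrap V c i)
  -- applyCast, for the EDA active casts
  | castId {Γ a ℓ} (h : Consis a a) {V : EDATm' Γ a} :
      EDAValue' V → Atomic a → EDARed' (.cast V (.mk a a ℓ h)) V
  | castProjOk {Γ A B ℓ₁ ℓ₂} (h₁ : Consis A .unk) (h₂ : Consis .unk B) (hc : Consis A B)
      {V : EDATm' Γ A} (i : EDAInert (.mk A .unk ℓ₁ h₁)) : EDAValue' V → B ≠ .unk →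
      EDARed' (.cast (.wrap V (.mk A .unk ℓ₁ h₁) i) (.mk .unk B ℓ₂ h₂))
              (.cast V (.mk A B ℓ₂ hc))
  | castProjFail {Γ A B ℓ₁ ℓ₂} (h₁ : Consis A .unk) (h₂ : Consis .unk B)
      {V : EDATm' Γ A} (i : EDAInert (.mk A .unk ℓ₁ h₁)) : EDAValue' V → B ≠ .unk →
      ¬ Nonempty (Consis A B) →
      EDARed' (.cast (.wrap V (.mk A .unk ℓ₁ h₁) i) (.mk .unk B ℓ₂ h₂)) (.blame B ℓ₂)
  | castFun {Γ A B C D ℓ} (h : Consis (.arr A B) (.arr C D)) {V : EDATm' Γ (.arr A B)} :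
      EDAValue' V →
      EDARed' (.cast V (.mk _ _ ℓ h))
        (.lam C (.cast (.app (V.rename (shiftRen C)) (.cast (.var .z) (.mk C A ℓ h.domArr)))
               (.mk B D ℓ h.codArr)))
  | castPair {Γ A B C D ℓ} (h : Consis (.prod A B) (.prod C D)) {V : EDATm' Γ (.prod A B)} :
      EDAValue' V →
      EDARed' (.cast V (.mk _ _ ℓ h))
        (.cons (.cast (.fst V) (.mk A C ℓ h.fstP)) (.cast (.snd V) (.mk B D ℓ h.sndP)))
  | castSum {Γ A B C D ℓ} (h : Consis (.sum A B) (.sum C D)) {V : EDATm' Γ (.sum A B)} :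
      EDAValue' V →
      EDARed' (.cast V (.mk _ _ ℓ h))
        (.case V (.inl D (.cast (.var .z) (.mk A C ℓ h.inlS)))
                 (.inr C (.cast (.var .z) (.mk B D ℓ h.inrS))))
  -- elimination of values wrapped in inert cross casts (vacuous for EDA)
  | funCast {Γ A B C D ℓ} (h : Consis (.arr A B) (.arr C D))
      {V : EDATm' Γ (.arr A B)} {W : EDATm' Γ C} (i : EDAInert (.mk _ _ ℓ h)) :
      EDAValue' V → EDAValue' W →
      EDARed' (.app (.wrap V (.mk _ _ ℓ h) i) W)
              (.cast (.app V (.cast W (.mk C A ℓ h.domArr))) (.mk B D ℓ h.codArr))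
  | fstCast {Γ A B C D ℓ} (h : Consis (.prod A B) (.prod C D)) {V : EDATm' Γ (.prod A B)}
      (i : EDAInert (.mk _ _ ℓ h)) : EDAValue' V →
      EDARed' (.fst (.wrap V (.mk _ _ ℓ h) i)) (.cast (.fst V) (.mk A C ℓ h.fstP))
  | sndCast {Γ A B C D ℓ} (h : Consis (.prod A B) (.prod C D)) {V : EDATm' Γ (.prod A B)}
      (i : EDAInert (.mk _ _ ℓ h)) : EDAValue' V →
      EDARed' (.snd (.wrap V (.mk _ _ ℓ h) i)) (.cast (.snd V) (.mk B D ℓ h.sndP))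
  | caseCast {Γ A B C D E ℓ} (h : Consis (.sum A B) (.sum C D))
      {V : EDATm' Γ (.sum A B)}
      {M : EDATm' (C :: Γ) E} {N : EDATm' (D :: Γ) E} (i : EDAInert (.mk _ _ ℓ h)) :
      EDAValue' V →
      EDARed' (.case (.wrap V (.mk _ _ ℓ h) i) M N)
        (.case V
          ((M.rename ((shiftRen (Γ := Γ) A).ext C)).subst1 (.cast (.var .z) (.mk A C ℓ h.inlS)))
          ((N.rename ((shiftRen (Γ := Γ) B).ext D)).subst1 (.cast (.var .z) (.mk B D ℓ h.inrS))))
  -- the usual STLC rules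
  | beta {Γ A B} {M : EDATm' (A :: Γ) B} {V : EDATm' Γ A} :
      EDAValue' V → EDARed' (.app (.lam A M) V) (M.subst1 V)
  | delta {Γ : List GType} {b A} (p : Prim A) (f : Prim.rep (.fn b p)) (k : Prim.rep (.base b)) :
      EDARed' (Γ := Γ) (.app (.const (.fn b p) f) (.const (.base b) k)) (.const p (f k))
  | ifTrue {Γ A} {M N : EDATm' Γ A} :
      EDARed' (.ite (.const (.base .bool) true) M N) M
  | ifFalse {Γ A} {M N : EDATm' Γ A} :
      EDARed' (.ite (.const (.base .bool) false) M N) N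
  | betaFst {Γ A B} {V : EDATm' Γ A} {W : EDATm' Γ B} :
      EDAValue' V → EDAValue' W → EDARed' (.fst (.cons V W)) V
  | betaSnd {Γ A B} {V : EDATm' Γ A} {W : EDATm' Γ B} :
      EDAValue' V → EDAValue' W → EDARed' (.snd (.cons V W)) W
  | caseL {Γ A B C} {V : EDATm' Γ A} {M : EDATm' (A :: Γ) C} {N : EDATm' (B :: Γ) C} :
      EDAValue' V → EDARed' (.case (.inl B V) M N) (M.subst1 V)
  | caseR {Γ A B C} {V : EDATm' Γ B} {M : EDATm' (A :: Γ) C} {N : EDATm' (B :: Γ) C} :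
      EDAValue' V → EDARed' (.case (.inr A V) M N) (N.subst1 V)

/-- The "safe for" predicate: every cast (and blame expression) in the term
is blame-safe for the label `ℓ`. -/
inductive SafeFor : ∀ {Γ : List GType} {A : GType}, EDATm' Γ A → Label → Prop
  | const {Γ A} {p : Prim A} {k : p.rep} {ℓ} : SafeFor (.const (Γ := Γ) p k) ℓ
  | var {Γ A} {x : GVar Γ A} {ℓ} : SafeFor (.var x) ℓ
  | lam {Γ A B} {N : EDATm' (A :: Γ) B} {ℓ} : SafeFor N ℓ → SafeFor (.lam A N) ℓ
  | app {Γ A B} {L : EDATm' Γ (.arr A B)} {M : EDATm' Γ A} {ℓ} :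
      SafeFor L ℓ → SafeFor M ℓ → SafeFor (.app L M) ℓ
  | ite {Γ A} {L : EDATm' Γ (.base .bool)} {M N : EDATm' Γ A} {ℓ} :
      SafeFor L ℓ → SafeFor M ℓ → SafeFor N ℓ → SafeFor (.ite L M N) ℓ
  | cons {Γ A B} {M : EDATm' Γ A} {N : EDATm' Γ B} {ℓ} :
      SafeFor M ℓ → SafeFor N ℓ → SafeFor (.cons M N) ℓ
  | fst {Γ A B} {M : EDATm' Γ (.prod A B)} {ℓ} : SafeFor M ℓ → SafeFor (.fst M) ℓ
  | snd {Γ A B} {M : EDATm' Γ (.prod A B)} {ℓ} : SafeFor M ℓ → SafeFor (.snd M) ℓ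
  | inl {Γ A B} {M : EDATm' Γ A} {ℓ} : SafeFor M ℓ → SafeFor (.inl (Γ := Γ) B M) ℓ
  | inr {Γ A B} {M : EDATm' Γ B} {ℓ} : SafeFor M ℓ → SafeFor (.inr (Γ := Γ) A M) ℓ
  | case {Γ A B C} {L : EDATm' Γ (.sum A B)} {M : EDATm' (A :: Γ) C} {N : EDATm' (B :: Γ) C} {ℓ} :
      SafeFor L ℓ → SafeFor M ℓ → SafeFor N ℓ → SafeFor (.case L M N) ℓ
  | cast {Γ A B} {M : EDATm' Γ A} {c : EDACast A B} {ℓ} :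
      CastBlameSafe c ℓ → SafeFor M ℓ → SafeFor (.cast M c) ℓ
  | wrap {Γ A B} {M : EDATm' Γ A} {c : EDACast A B} {i : EDAInert c} {ℓ} :
      CastBlameSafe c ℓ → SafeFor M ℓ → SafeFor (.wrap M c i) ℓ
  | blame {Γ A} {ℓ ℓ' : Label} : ℓ ≠ ℓ' → SafeFor (.blame (Γ := Γ) A ℓ') ℓ

theorem CastBlameSafe.proj_ne {B : GType} {ℓ ℓ' : Label} {h : Consis .unk B}
    (hs : CastBlameSafe (.mk .unk B ℓ' h) ℓ) (hB : B ≠ .unk) : ℓ ≠ ℓ' := by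
  cases hs with
  | sub hsub => cases hsub; exact absurd rfl hB
  | neq hne => exact hne

/-- The domain and codomain of a safe function cast are safe; the domain is contravariant. -/
theorem CastBlameSafe.arr {A B C D : GType} {ℓ ℓ' : Label} {h : Consis (.arr A B) (.arr C D)}
    (hs : CastBlameSafe (.mk _ _ ℓ' h) ℓ) (hd : Consis C A) (hc : Consis B D) :
    CastBlameSafe (.mk C A ℓ' hd) ℓ ∧ CastBlameSafe (.mk B D ℓ' hc) ℓ := by
  cases hs with
  | sub hsub => cases hsub with | arr h₁ h₂ => exact ⟨.sub h₁, .sub h₂⟩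
  | neq hne => exact ⟨.neq hne, .neq hne⟩

theorem CastBlameSafe.prod {A B C D : GType} {ℓ ℓ' : Label} {h : Consis (.prod A B) (.prod C D)}
    (hs : CastBlameSafe (.mk _ _ ℓ' h) ℓ) (hf : Consis A C) (hg : Consis B D) :
    CastBlameSafe (.mk A C ℓ' hf) ℓ ∧ CastBlameSafe (.mk B D ℓ' hg) ℓ := by
  cases hs with
  | sub hsub => cases hsub with | prod h₁ h₂ => exact ⟨.sub h₁, .sub h₂⟩
  | neq hne => exact ⟨.neq hne, .neq hne⟩

theorem CastBlameSafe.sum {A B C D : GType} {ℓ ℓ' : Label} {h : Consis (.sum A B) (.sum C D)}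
    (hs : CastBlameSafe (.mk _ _ ℓ' h) ℓ) (hf : Consis A C) (hg : Consis B D) :
    CastBlameSafe (.mk A C ℓ' hf) ℓ ∧ CastBlameSafe (.mk B D ℓ' hg) ℓ := by
  cases hs with
  | sub hsub => cases hsub with | sum h₁ h₂ => exact ⟨.sub h₁, .sub h₂⟩
  | neq hne => exact ⟨.neq hne, .neq hne⟩

theorem SafeFor.rename {Γ : List GType} {A : GType} {M : EDATm' Γ A} {ℓ : Label}
    (hM : SafeFor M ℓ) : ∀ {Δ : List GType} (ρ : Ren Γ Δ), SafeFor (M.rename ρ) ℓ := by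
  induction hM with
  | const => intro Δ ρ; exact .const
  | var => intro Δ ρ; exact .var
  | lam _ ih => intro Δ ρ; exact .lam (ih _)
  | app _ _ ih₁ ih₂ => intro Δ ρ; exact .app (ih₁ ρ) (ih₂ ρ)
  | ite _ _ _ ih₁ ih₂ ih₃ => intro Δ ρ; exact .ite (ih₁ ρ) (ih₂ ρ) (ih₃ ρ)
  | cons _ _ ih₁ ih₂ => intro Δ ρ; exact .cons (ih₁ ρ) (ih₂ ρ)
  | fst _ ih => intro Δ ρ; exact .fst (ih ρ)
  | snd _ ih => intro Δ ρ; exact .snd (ih ρ)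
  | inl _ ih => intro Δ ρ; exact .inl (ih ρ)
  | inr _ ih => intro Δ ρ; exact .inr (ih ρ)
  | case _ _ _ ih₁ ih₂ ih₃ => intro Δ ρ; exact .case (ih₁ ρ) (ih₂ _) (ih₃ _)
  | cast hc _ ih => intro Δ ρ; exact .cast hc (ih ρ)
  | wrap hc _ ih => intro Δ ρ; exact .wrap hc (ih ρ)
  | blame hne => intro Δ ρ; exact .blame hne

/-- A substitution is safe for `ℓ` when all the terms it substitutes are. -/
def SafeSubst {Γ Δ : List GType} (σ : Subst' EDACast EDAInert' Γ Δ) (ℓ : Label) : Prop :=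
  ∀ (A : GType) (x : GVar Γ A), SafeFor (σ A x) ℓ

theorem SafeSubst.exts {Γ Δ : List GType} {σ : Subst' EDACast EDAInert' Γ Δ} {ℓ : Label}
    (hσ : SafeSubst σ ℓ) (B : GType) : SafeSubst (σ.exts B) ℓ := by
  intro A x
  cases x with
  | z => exact .var
  | s y => exact (hσ _ y).rename _

theorem SafeFor.subst {Γ : List GType} {A : GType} {M : EDATm' Γ A} {ℓ : Label}
    (hM : SafeFor M ℓ) : ∀ {Δ : List GType} {σ : Subst' EDACast EDAInert' Γ Δ},
      SafeSubst σ ℓ → SafeFor (M.subst σ) ℓ := by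
  induction hM with
  | const => intro Δ σ hσ; exact .const
  | var => intro Δ σ hσ; exact hσ _ _
  | lam _ ih => intro Δ σ hσ; exact .lam (ih (hσ.exts _))
  | app _ _ ih₁ ih₂ => intro Δ σ hσ; exact .app (ih₁ hσ) (ih₂ hσ)
  | ite _ _ _ ih₁ ih₂ ih₃ => intro Δ σ hσ; exact .ite (ih₁ hσ) (ih₂ hσ) (ih₃ hσ)
  | cons _ _ ih₁ ih₂ => intro Δ σ hσ; exact .cons (ih₁ hσ) (ih₂ hσ)
  | fst _ ih => intro Δ σ hσ; exact .fst (ih hσ)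
  | snd _ ih => intro Δ σ hσ; exact .snd (ih hσ)
  | inl _ ih => intro Δ σ hσ; exact .inl (ih hσ)
  | inr _ ih => intro Δ σ hσ; exact .inr (ih hσ)
  | case _ _ _ ih₁ ih₂ ih₃ =>
    intro Δ σ hσ; exact .case (ih₁ hσ) (ih₂ (hσ.exts _)) (ih₃ (hσ.exts _))
  | cast hc _ ih => intro Δ σ hσ; exact .cast hc (ih hσ)
  | wrap hc _ ih => intro Δ σ hσ; exact .wrap hc (ih hσ)
  | blame hne => intro Δ σ hσ; exact .blame hne

theorem SafeFor.subst1 {Γ : List GType} {A B : GType} {M : EDATm' (B :: Γ) A} {N : EDATm' Γ B}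
    {ℓ : Label} (hM : SafeFor M ℓ) (hN : SafeFor N ℓ) : SafeFor (M.subst1 N) ℓ := by
  refine hM.subst fun A x => ?_
  cases x with
  | z => exact hN
  | s y => exact .var

/-- In a safe plugged frame the plugged term is safe, and it may be replaced by any other safe
term. -/
theorem SafeFor.plug {Γ : List GType} {A B : GType} {M : EDATm' Γ A} {ℓ : Label}
    (F : Frame' EDACast EDAInert' @EDAValue' Γ A B) (h : SafeFor (plug' M F) ℓ) :
    SafeFor M ℓ ∧ ∀ M' : EDATm' Γ A, SafeFor M' ℓ → SafeFor (plug' M' F) ℓ := by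
  cases F with
  | appL N => cases h with | app h₁ h₂ => exact ⟨h₁, fun _ h' => .app h' h₂⟩
  | appR L hL => cases h with | app h₁ h₂ => exact ⟨h₂, fun _ h' => .app h₁ h'⟩
  | ite M₁ N₁ => cases h with | ite h₁ h₂ h₃ => exact ⟨h₁, fun _ h' => .ite h' h₂ h₃⟩
  | consR M₁ hV => cases h with | cons h₁ h₂ => exact ⟨h₂, fun _ h' => .cons h₁ h'⟩
  | consL N => cases h with | cons h₁ h₂ => exact ⟨h₁, fun _ h' => .cons h' h₂⟩
  | fst => cases h with | fst h₁ => exact ⟨h₁, fun _ h' => .fst h'⟩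
  | snd => cases h with | snd h₁ => exact ⟨h₁, fun _ h' => .snd h'⟩
  | inl B => cases h with | inl h₁ => exact ⟨h₁, fun _ h' => .inl h'⟩
  | inr A => cases h with | inr h₁ => exact ⟨h₁, fun _ h' => .inr h'⟩
  | case M₁ N₁ => cases h with | case h₁ h₂ h₃ => exact ⟨h₁, fun _ h' => .case h' h₂ h₃⟩
  | cast c => cases h with | cast hc h₁ => exact ⟨h₁, fun _ h' => .cast hc h'⟩

/-- Safety for a label is preserved by reduction. -/
theorem SafeFor.red {Γ : List GType} {A : GType} {M M' : EDATm' Γ A} {ℓ : Label}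
    (hr : EDARed' M M') (h : SafeFor M ℓ) : SafeFor M' ℓ := by
  induction hr with
  | xi F _ ih =>
    obtain ⟨h₁, h₂⟩ := h.plug F
    exact h₂ _ (ih h₁)
  | xiBlame F ℓ' =>
    cases (h.plug F).1 with | blame hne => exact .blame hne
  | wrap i _ => cases h with | cast hc hV => exact .wrap hc hV
  | castId _ _ _ => cases h with | cast _ hV => exact hV
  | castProjOk _ _ hc i _ hB =>
    cases h with | cast hp hw => cases hw with | wrap _ hV =>
      exact .cast (.neq (hp.proj_ne hB)) hV
  | castProjFail _ _ i _ hB _ =>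
    cases h with | cast hp _ => exact .blame (hp.proj_ne hB)
  | castFun k _ =>
    cases h with | cast hc hV =>
      obtain ⟨hd, hcod⟩ := hc.arr k.domArr k.codArr
      exact .lam (.cast hcod (.app (hV.rename _) (.cast hd .var)))
  | castPair k _ =>
    cases h with | cast hc hV =>
      obtain ⟨h₁, h₂⟩ := hc.prod k.fstP k.sndP
      exact .cons (.cast h₁ (.fst hV)) (.cast h₂ (.snd hV))
  | castSum k _ =>
    cases h with | cast hc hV =>
      obtain ⟨h₁, h₂⟩ := hc.sum k.inlS k.inrS
      exact .case hV (.inl (.cast h₁ .var)) (.inr (.cast h₂ .var))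
  -- The next four rules are vacuous: an inert EDA cast has target `?`, so it is not a cross cast.
  | funCast _ i _ _ => cases i
  | fstCast _ i _ => cases i
  | sndCast _ i _ => cases i
  | caseCast _ i _ => cases i
  | beta _ =>
    cases h with | app hL hV => cases hL with | lam hN => exact hN.subst1 hV
  | delta p f k => exact .const
  | ifTrue => cases h with | ite _ hM _ => exact hM
  | ifFalse => cases h with | ite _ _ hN => exact hN
  | betaFst _ _ => cases h with | fst hp => cases hp with | cons hV _ => exact hV
  | betaSnd _ _ => cases h with | snd hp => cases hp with | cons _ hW => exact hW
  | caseL _ =>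
    cases h with | case hL hM _ => cases hL with | inl hV => exact hM.subst1 hV
  | caseR _ =>
    cases h with | case hL _ hN => cases hL with | inr hV => exact hN.subst1 hV

/-- Blame-Subtyping Theorem for EDA′ (Corollary 5.8): if every cast in `M` is
blame-safe for `ℓ`, then `M` never reduces (in any number of steps) to
`blame ℓ`. -/
theorem blame_subtyping_EDA' {Γ : List GType} {A : GType} (M : EDATm' Γ A) (ℓ : Label)
    (h : SafeFor M ℓ) : ¬ Relation.ReflTransGen EDARed' M (.blame A ℓ) := by
  intro hr
  have hsafe : ∀ N : EDATm' Γ A, Relation.ReflTransGen EDARed' M N → SafeFor N ℓ := by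
    intro N hN
    induction hN with
    | refl => exact h
    | tail _ hstep ih => exact SafeFor.red hstep ih
  cases hsafe _ hr with | blame hne => exact hne rfl
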